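/- For a finite connected graph G, the minimal number of forests partitioning the edge set of G equals the minimal number of subtrees (connected acyclic subgraphs) whose edge sets cover the edge set of G. -/

import Mathlib

namespace SimpleGraph

/-- A graph is acyclic if it becomes acyclic after discarding some isolated vertices. -/
lemma IsAcyclic.of_induce {V : Type*} {G : SimpleGraph V} {s : Set V} (hs : G.support ⊆ s)
    (h : (G.induce s).IsAcyclic) : G.IsAcyclic := by
  intro v c hc
  have hmem : ∀ x ∈ c.support, x ∈ s :=
    fun x hx ↦ hs (mem_support_of_mem_walk_support c hc.not_nil hx)
  refine h (c.induce s hmem) (Walk.IsCycle.of_map (f := (Embedding.induce s).toHom) ?_)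
  rwa [Walk.map_induce]

lemma Subgraph.isAcyclic_spanningCoe {V : Type*} {G : SimpleGraph V} {H : G.Subgraph}
    (h : H.coe.IsAcyclic) : H.spanningCoe.IsAcyclic :=
  .of_induce (s := H.verts) (fun _ ⟨_, hvw⟩ ↦ H.edge_vert hvw) h

/-- Forests partitioning the edges of a connected graph extend to subtrees covering them. -/
lemma Connected.exists_tree_cover {V ι : Type*} {G : SimpleGraph V} (hconn : G.Connected)
    (F : ι → SimpleGraph V) (hF : ∀ i, F i ≤ G ∧ (F i).IsAcyclic) :
    ∃ T : ι → G.Subgraph, (∀ i, (T i).coe.Connected ∧ (T i).coe.IsAcyclic) ∧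
      ∀ i, (F i).edgeSet ⊆ (T i).edgeSet := by
  choose S hFS hSG hS using fun i ↦ hconn.exists_isTree_le_of_le_of_isAcyclic (hF i).1 (hF i).2
  refine ⟨fun i ↦ toSubgraph (S i) (hSG i), fun i ↦ ?_, fun i e he ↦ ?_⟩
  · have e := (toSubgraph (S i) (hSG i)).spanningCoeEquivCoeOfSpanning
      (toSubgraph.isSpanning (S i) (hSG i))
    exact ⟨e.connected_iff.1 (hS i).connected, e.isAcyclic_iff.1 (hS i).isAcyclic⟩
  · induction e with | _ v w => exact hFS i he

/-- Assigning each edge to the first member of a cover that contains it gives a partition. -/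
lemma exists_partition_of_cover {V ι : Type*} [LinearOrder ι] [WellFoundedLT ι]
    {G : SimpleGraph V} (H : ι → SimpleGraph V) (hH : ∀ e ∈ G.edgeSet, ∃ i, e ∈ (H i).edgeSet) :
    ∃ F : ι → SimpleGraph V, (∀ i, F i ≤ H i) ∧ ∀ e ∈ G.edgeSet, ∃! i, e ∈ (F i).edgeSet := by
  refine ⟨fun i ↦ (H i).deleteEdges {e | ∃ j < i, e ∈ (H j).edgeSet},
    fun i ↦ deleteEdges_le _, fun e he ↦ ?_⟩
  simp only [edgeSet_deleteEdges, Set.mem_sdiff, Set.mem_ofPred_eq, not_exists, not_and]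
  obtain ⟨i, hi, hmin⟩ := WellFounded.has_min (wellFounded_lt (α := ι))
    {i | e ∈ (H i).edgeSet} (hH e he)
  exact ⟨i, ⟨hi, fun j hj h ↦ hmin j h hj⟩, fun j hj ↦
    le_antisymm (not_lt.1 fun h ↦ hj.2 i h hi) (not_lt.1 (hmin j hj.1))⟩

end SimpleGraph

/-- For a finite connected graph `G` (with at least one edge), the
minimal number of forests partitioning the edge set of `G` equals the minimal
number of subtrees (connected acyclic subgraphs) whose edge sets cover the edge
set of `G`. -/
theorem forest_partition_eq_tree_cover {V : Type*} [Fintype V]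
    (G : SimpleGraph V) (hconn : G.Connected) (hne : G.edgeSet.Nonempty) :
    sInf {k | ∃ F : Fin k → SimpleGraph V,
        (∀ i, F i ≤ G ∧ (F i).IsAcyclic) ∧
        ∀ e ∈ G.edgeSet, ∃! i, e ∈ (F i).edgeSet} =
    sInf {k | ∃ T : Fin k → G.Subgraph,
        (∀ i, (T i).coe.Connected ∧ (T i).coe.IsAcyclic) ∧
        ∀ e ∈ G.edgeSet, ∃ i, e ∈ (T i).edgeSet} := by
  congr 1
  ext k
  constructor
  · rintro ⟨F, hF, hpart⟩
    obtain ⟨T, hT, hFT⟩ := hconn.exists_tree_cover F hF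
    exact ⟨T, hT, fun e he ↦ (hpart e he).exists.imp fun i hi ↦ hFT i hi⟩
  · rintro ⟨T, hT, hcov⟩
    obtain ⟨F, hFT, hpart⟩ := SimpleGraph.exists_partition_of_cover
      (fun i ↦ (T i).spanningCoe) (G := G) (by simpa using hcov)
    exact ⟨F, fun i ↦ ⟨(hFT i).trans (T i).spanningCoe_le,
      (SimpleGraph.Subgraph.isAcyclic_spanningCoe (hT i).2).anti (hFT i)⟩, hpart⟩
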